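/- Let d ≥ 1 and r ∈ [1,∞]. There is a constant C_r (depending only on r and d) such that for every σ ∈ ℕ₊ and all a, f ∈ C^∞(𝕋^d), the improved Hölder inequality holds: | ‖a(·) f(σ·)‖_{L^r(𝕋^d)} − ‖a‖_{L^r(𝕋^d)} ‖f‖_{L^r(𝕋^d)} | ≤ C_r σ^{−1/r} ‖a‖_{C^1} ‖f‖_{L^r(𝕋^d)}. -/

import Mathlib

open MeasureTheory ENNReal

noncomputable section

/-- Points of `ℝ^d` (representing the torus `𝕋^d = ℝ^d/ℤ^d` via periodic functions). -/
abbrev Vec (d : ℕ) := Fin d → ℝ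

/-- One fundamental domain `[0,1]^d` of the torus. -/
def fundCube (d : ℕ) : Set (Vec d) := Set.Icc 0 1

/-- `ℤ^d`-periodicity of a function on `ℝ^d`. -/
def ZPer {d : ℕ} {α : Type*} (f : Vec d → α) : Prop :=
  ∀ (x : Vec d) (k : Fin d → ℤ), f (x + fun i => (k i : ℝ)) = f x

/-- Generic `L^p` "norm" (`p ∈ [1,∞]` as `ℝ≥0∞`) of an `ℝ≥0∞`-valued function. -/
def eLpGen {α : Type*} [MeasurableSpace α] (μ : Measure α) (p : ℝ≥0∞)
    (g : α → ℝ≥0∞) : ℝ≥0∞ :=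
  if p = ∞ then essSup g μ
  else (∫⁻ a, g a ^ p.toReal ∂μ) ^ (1 / p.toReal)

/-- Spatial `L^p` norm over one fundamental domain of the torus. -/
def spLp {d : ℕ} {E : Type*} [NormedAddCommGroup E] (p : ℝ≥0∞)
    (f : Vec d → E) : ℝ≥0∞ :=
  eLpGen (volume.restrict (fundCube d)) p (fun x => (‖f x‖₊ : ℝ≥0∞))

/-- `W^{1,q}` norm of a vector field on the torus: `‖u‖_{L^q} + ‖∇u‖_{L^q}`. -/
def W1qNorm {d : ℕ} (q : ℝ≥0∞) (u : Vec d → Vec d) : ℝ≥0∞ :=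
  spLp q u + spLp q (fderiv ℝ u)

/-- `L^s(0,T;L^p(𝕋^d))` norm. -/
def LsLpT {d : ℕ} {E : Type*} [NormedAddCommGroup E] (T : ℝ) (s p : ℝ≥0∞)
    (f : ℝ → Vec d → E) : ℝ≥0∞ :=
  eLpGen (volume.restrict (Set.Ioo 0 T)) s (fun t => spLp p (f t))

/-- `L^s(0,T;W^{1,q}(𝕋^d))` norm. -/
def LsW1qT {d : ℕ} (T : ℝ) (s q : ℝ≥0∞) (u : ℝ → Vec d → Vec d) : ℝ≥0∞ :=
  eLpGen (volume.restrict (Set.Ioo 0 T)) s (fun t => W1qNorm q (u t))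

/-- Gradient of a scalar function on `ℝ^d`. -/
def gradV {d : ℕ} (f : Vec d → ℝ) (x : Vec d) : Vec d :=
  fun i => fderiv ℝ f x (Pi.single i 1)

/-- Divergence of a vector field on `ℝ^d`. -/
def divV {d : ℕ} (v : Vec d → Vec d) (x : Vec d) : ℝ :=
  ∑ i, fderiv ℝ (fun y => v y i) x (Pi.single i 1)

/-- Laplacian of a scalar function on `ℝ^d`. -/
def laplV {d : ℕ} (f : Vec d → ℝ) : Vec d → ℝ := divV (gradV f)

/-- Euclidean dot product on `ℝ^d`. -/
def dotV {d : ℕ} (a b : Vec d) : ℝ := ∑ i, a i * b i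

/-- `C^N` norm over one fundamental domain. -/
def CkN {d : ℕ} (N : ℕ) (φ : Vec d → ℝ) : ℝ :=
  ∑ i ∈ Finset.range (N + 1), sSup ((fun x => ‖iteratedFDeriv ℝ i φ x‖) '' fundCube d)

/-- `W^{m,r}` norm over one fundamental domain. -/
def SobN {d : ℕ} {E : Type*} [NormedAddCommGroup E] [NormedSpace ℝ E]
    (m : ℕ) (r : ℝ≥0∞) (f : Vec d → E) : ℝ≥0∞ :=
  ∑ i ∈ Finset.range (m + 1), spLp r (iteratedFDeriv ℝ i f)

/-- Test functions for the weak formulation on `[0,T) × 𝕋^d`: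
smooth, `ℤ^d`-periodic in space, vanishing for `t` near `T` (compact support in `[0,T)`). -/
def IsTest (d : ℕ) (T : ℝ) (φ : ℝ → Vec d → ℝ) : Prop :=
  ContDiff ℝ (⊤ : ℕ∞) (Function.uncurry φ) ∧ (∀ t, ZPer (φ t)) ∧
    ∃ T', T' < T ∧ ∀ t, T' ≤ t → ∀ x, φ t x = 0

/-- `ρ` is a weak solution on `(0,T) × 𝕋^d` of `∂_t ρ + u·∇ρ = 0` with initial data `ρ₀`. -/
def IsWeakSolution (d : ℕ) (T : ℝ) (u : ℝ → Vec d → Vec d)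
    (ρ : ℝ → Vec d → ℝ) (ρ₀ : Vec d → ℝ) : Prop :=
  ∀ φ : ℝ → Vec d → ℝ, IsTest d T φ →
    ∫ x in fundCube d, ρ₀ x * φ 0 x =
      ∫ t in Set.Ioo 0 T, ∫ x in fundCube d,
        ρ t x * (deriv (fun τ => φ τ x) t + fderiv ℝ (φ t) x (u t x))

/-- `u` is divergence free in the sense of distributions on `(0,T) × 𝕋^d`. -/
def WeaklyDivFree (d : ℕ) (T : ℝ) (u : ℝ → Vec d → Vec d) : Prop :=
  ∀ φ : ℝ → Vec d → ℝ, ContDiff ℝ (⊤ : ℕ∞) (Function.uncurry φ) →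
    (∀ t, ZPer (φ t)) →
    ∫ t in Set.Ioo 0 T, ∫ x in fundCube d, fderiv ℝ (φ t) x (u t x) = 0

end

/-!
The idea is to unfold the two scales of `a(x) f(σx)`. For each `y`, the translation
`x ↦ x + y/σ` preserves Haar measure on the torus, hence so does averaging over `y ∈ [0,1]^d`:
`‖a f(σ·)‖_r` is the `L^r` norm of `a(x + y/σ) f(σx + y)` in the pair `(x, y)`. If the slow
variable is frozen, that is, `a(x + y/σ)` is replaced by `a(x)`, the shear
`(x, y) ↦ (x, σx + y)` decouples the two factors, and the norm becomes exactly `‖a‖_r ‖f‖_r`.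
Freezing costs at most `Lip(a) σ⁻¹ ‖f‖_r`, since `|y| ≤ 1` in the supremum norm. This bound holds
for all `r ∈ [1,∞]`, and `σ⁻¹ ≤ σ^(-1/r)`.
-/

open scoped NNReal Pointwise

section Lp

variable {α β 𝕜 E F : Type*} [MeasurableSpace α] [MeasurableSpace β] {μ : Measure α} {ν : Measure β}
  [NormedField 𝕜] [NormedAddCommGroup E] [NormedAddCommGroup F] [NormedSpace 𝕜 E] {p : ℝ≥0∞}

theorem abs_toReal_eLpNorm_sub_le (hp : 1 ≤ p) {f g : α → E} (hf : MemLp f p μ)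
    (hg : MemLp g p μ) :
    |(eLpNorm f p μ).toReal - (eLpNorm g p μ).toReal| ≤ (eLpNorm (f - g) p μ).toReal := by
  have : Fact (1 ≤ p) := ⟨hp⟩
  rw [← Lp.norm_toLp f hf, ← Lp.norm_toLp g hg, ← Lp.norm_toLp _ (hf.sub hg), MemLp.toLp_sub]
  exact abs_norm_sub_norm_le _ _

theorem abs_toReal_eLpNorm_sub_le_of_ae_le_mul (hp : 1 ≤ p) {f g : α → E} {h : α → F} {C : ℝ≥0}
    (hf : AEStronglyMeasurable f μ) (hg : MemLp g p μ) (hh : MemLp h p μ)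
    (hC : ∀ᵐ x ∂μ, ‖f x - g x‖ ≤ C * ‖h x‖) :
    |(eLpNorm f p μ).toReal - (eLpNorm g p μ).toReal| ≤ C * (eLpNorm h p μ).toReal := by
  have hfg : MemLp (f - g) p μ := hh.of_le_mul (hf.sub hg.1) hC
  have hfp : MemLp f p μ := by simpa using hfg.add hg
  calc |(eLpNorm f p μ).toReal - (eLpNorm g p μ).toReal|
      ≤ (eLpNorm (f - g) p μ).toReal := abs_toReal_eLpNorm_sub_le hp hfp hg
    _ ≤ (C * eLpNorm h p μ).toReal :=
        ENNReal.toReal_mono (ENNReal.mul_ne_top ENNReal.coe_ne_top hh.2.ne)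
          (eLpNorm_le_nnreal_smul_eLpNorm_of_ae_le_mul hC p)
    _ = C * (eLpNorm h p μ).toReal := by rw [ENNReal.toReal_mul, ENNReal.coe_toReal]

theorem essSup_prod_mul [SFinite ν] (f : α → ℝ≥0∞) (g : β → ℝ≥0∞) :
    essSup (fun z => f z.1 * g z.2) (μ.prod ν) = essSup f μ * essSup g ν := by
  apply le_antisymm
  · refine essSup_le_of_ae_le _ ?_
    filter_upwards [(Measure.quasiMeasurePreserving_fst (ν := ν)).ae (ENNReal.ae_le_essSup f),
      (Measure.quasiMeasurePreserving_snd (μ := μ)).ae (ENNReal.ae_le_essSup g)] with z hf hg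
    exact mul_le_mul' hf hg
  · have slice : ∀ᵐ x ∂μ, f x * essSup g ν ≤ essSup (fun z => f z.1 * g z.2) (μ.prod ν) := by
      have bound := ENNReal.ae_le_essSup (μ := μ.prod ν) fun z => f z.1 * g z.2
      filter_upwards [Measure.ae_ae_of_ae_prod bound] with x hx
      rw [← ENNReal.essSup_const_mul]
      exact essSup_le_of_ae_le _ hx
    rw [mul_comm, ← ENNReal.essSup_const_mul]
    simp_rw [mul_comm (essSup g ν)]
    exact essSup_le_of_ae_le _ slice

theorem eLpNorm_prod_smul [SFinite ν] {f : α → 𝕜} {g : β → E}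
    (hf : AEStronglyMeasurable f μ) (hg : AEStronglyMeasurable g ν) :
    eLpNorm (fun z => f z.1 • g z.2) p (μ.prod ν) = eLpNorm f p μ * eLpNorm g p ν := by
  rcases eq_or_ne p 0 with rfl | h0
  · simp
  rcases eq_or_ne p ∞ with rfl | htop
  · simp only [eLpNorm_exponent_top, eLpNormEssSup_eq_essSup_enorm, enorm_smul]
    exact essSup_prod_mul (fun x => ‖f x‖ₑ) (fun y => ‖g y‖ₑ)
  · simp only [eLpNorm_eq_lintegral_rpow_enorm_toReal h0 htop, enorm_smul,
      ENNReal.mul_rpow_of_nonneg _ _ ENNReal.toReal_nonneg]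
    rw [lintegral_prod_mul (hf.enorm.pow_const _) (hg.enorm.pow_const _),
      ENNReal.mul_rpow_of_nonneg _ _ (by positivity)]

theorem memLp_prod_smul [SFinite ν] {f : α → 𝕜} {g : β → E} (hf : MemLp f p μ) (hg : MemLp g p ν) :
    MemLp (fun z => f z.1 • g z.2) p (μ.prod ν) := by
  refine ⟨hf.1.comp_fst.smul hg.1.comp_snd, ?_⟩
  rw [eLpNorm_prod_smul hf.1 hg.1]
  exact ENNReal.mul_lt_top hf.2 hg.2

end Lp

section Torus

variable {d : ℕ}

/-- The lattice `ℤ^d` of periods, in the form expected by Mathlib's `ZSpan` API. -/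
abbrev intLattice (d : ℕ) : Submodule ℤ (Vec d) :=
  Submodule.span ℤ (Set.range (Pi.basisFun ℝ (Fin d)))

/-- The representative in `[0,1)^d` of the class of `x` in the torus `ℝ^d/ℤ^d`. -/
noncomputable def torusRepr (x : Vec d) : Vec d := fun i => Int.fract (x i)

/-- The Haar probability measure of the torus, encoded as Lebesgue measure on `[0,1]^d`. -/
noncomputable def torusVolume (d : ℕ) : Measure (Vec d) := volume.restrict (fundCube d)

theorem measurable_torusRepr : Measurable (torusRepr : Vec d → Vec d) :=
  measurable_pi_lambda _ fun i => (measurable_pi_apply i).fract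

theorem zPer_torusRepr : ZPer (torusRepr : Vec d → Vec d) := fun x k => by
  ext i; simp [torusRepr]

theorem torusRepr_mem_fundCube (x : Vec d) : torusRepr x ∈ fundCube d :=
  ⟨fun _ => Int.fract_nonneg _, fun _ => (Int.fract_lt_one _).le⟩

theorem ZPer.comp_torusRepr {α : Type*} {f : Vec d → α} (hf : ZPer f) (x : Vec d) :
    f (torusRepr x) = f x := by
  rw [← hf x fun i => -⌊x i⌋]
  congr 1
  ext i
  simp [torusRepr, Int.fract, sub_eq_add_neg]

theorem ZPer.comp_natCast_smul {α : Type*} {f : Vec d → α} (hf : ZPer f) (n : ℕ) :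
    ZPer fun x => f ((n : ℝ) • x) := fun x k => by
  have scale : (n : ℝ) • (x + fun i => (k i : ℝ)) =
      (n : ℝ) • x + fun i => ((n * k i : ℤ) : ℝ) := by
    ext i; simp [mul_add]
  simp only [scale, hf _ _]

theorem ZPer.vadd_eq {α : Type*} {f : Vec d → α} (hf : ZPer f) (g : intLattice d) (x : Vec d) :
    f (g +ᵥ x) = f x := by
  choose k hk using ((Pi.basisFun ℝ (Fin d)).mem_span_iff_repr_mem ℤ (g : Vec d)).mp g.2
  have hg : (g : Vec d) = fun i => (k i : ℝ) := by
    ext i; simpa using (hk i).symm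
  rw [Submodule.vadd_def, vadd_eq_add, add_comm, hg, hf]

instance : VAddInvariantMeasure (intLattice d) (Vec d) volume :=
  ⟨fun g s _ => measure_preimage_add volume (g : Vec d) s⟩

theorem torusVolume_eq_restrict_fundamentalDomain :
    torusVolume d = volume.restrict (ZSpan.fundamentalDomain (Pi.basisFun ℝ (Fin d))) := by
  rw [ZSpan.fundamentalDomain_pi_basisFun]
  exact (Measure.restrict_congr_set Measure.univ_pi_Ico_ae_eq_Icc).symm

instance : IsProbabilityMeasure (torusVolume d) :=
  ⟨by simp [torusVolume, fundCube, Real.volume_Icc_pi]⟩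

theorem ae_torusVolume_norm_le_one : ∀ᵐ x ∂torusVolume d, ‖x‖ ≤ 1 := by
  filter_upwards [ae_restrict_mem measurableSet_Icc] with x hx
  refine (pi_norm_le_iff_of_nonneg zero_le_one).2 fun i => ?_
  rw [Real.norm_of_nonneg (hx.1 i)]
  exact hx.2 i

theorem torusRepr_preimage_inter_fundamentalDomain (s : Set (Vec d)) :
    torusRepr ⁻¹' s ∩ ZSpan.fundamentalDomain (Pi.basisFun ℝ (Fin d)) =
      s ∩ ZSpan.fundamentalDomain (Pi.basisFun ℝ (Fin d)) := by
  ext x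
  refine and_congr_left fun hx => ?_
  have : torusRepr x = x := by
    ext i
    exact Int.fract_eq_self.2 (by simpa using (ZSpan.mem_fundamentalDomain _).1 hx i)
  rw [Set.mem_preimage, this]

theorem measurePreserving_torusRepr_add (t : Vec d) :
    MeasurePreserving (fun x => torusRepr (x + t)) (torusVolume d) (torusVolume d) := by
  have meas : Measurable fun x : Vec d => torusRepr (x + t) :=
    measurable_torusRepr.comp (measurable_add_const t)
  refine ⟨meas, Measure.ext fun s hs => ?_⟩
  have fund := ZSpan.isAddFundamentalDomain (Pi.basisFun ℝ (Fin d)) (volume : Measure (Vec d))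
  rw [Measure.map_apply meas hs, torusVolume_eq_restrict_fundamentalDomain,
    Measure.restrict_apply (meas hs), Measure.restrict_apply hs]
  set D := ZSpan.fundamentalDomain (Pi.basisFun ℝ (Fin d))
  calc volume ((fun x => torusRepr (x + t)) ⁻¹' s ∩ D)
      = volume ((· + t) ⁻¹' (torusRepr ⁻¹' s ∩ (t +ᵥ D))) := by
        congr 1
        ext x
        simp [Set.mem_vadd_set_iff_neg_vadd_mem]
    _ = volume (torusRepr ⁻¹' s ∩ (t +ᵥ D)) := measure_preimage_add_right _ _ _
    _ = volume (torusRepr ⁻¹' s ∩ D) :=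
        ((fund.measure_set_eq (fund.vadd_of_comm t) (measurable_torusRepr hs)) fun g => by
          ext x; simp [zPer_torusRepr.vadd_eq g x]).symm
    _ = volume (s ∩ D) := by rw [torusRepr_preimage_inter_fundamentalDomain]

theorem quasiMeasurePreserving_torusRepr :
    Measure.QuasiMeasurePreserving (torusRepr : Vec d → Vec d) volume (torusVolume d) := by
  refine ⟨measurable_torusRepr, Measure.AbsolutelyContinuous.mk fun s hs h0 => ?_⟩
  rw [torusVolume_eq_restrict_fundamentalDomain, Measure.restrict_apply hs,
    ← torusRepr_preimage_inter_fundamentalDomain] at h0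
  rw [Measure.map_apply measurable_torusRepr hs]
  refine (ZSpan.isAddFundamentalDomain (Pi.basisFun ℝ (Fin d)) volume).measure_zero_of_invariant
    _ (fun g => ?_) h0
  ext x
  simp [Set.mem_vadd_set_iff_neg_vadd_mem, zPer_torusRepr.vadd_eq]

theorem measurePreserving_torus_shear {φ : Vec d → Vec d} (hφ : Measurable φ) :
    MeasurePreserving (fun z : Vec d × Vec d => (z.1, torusRepr (z.2 + φ z.1)))
      ((torusVolume d).prod (torusVolume d)) ((torusVolume d).prod (torusVolume d)) :=
  (MeasurePreserving.id _).skew_product (g := fun x y => torusRepr (y + φ x))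
    (measurable_torusRepr.comp (measurable_snd.add (hφ.comp measurable_fst)))
    (.of_forall fun x => (measurePreserving_torusRepr_add (φ x)).map_eq)

theorem measurePreserving_torusRepr_snd_add {φ : Vec d → Vec d} (hφ : Measurable φ) :
    MeasurePreserving (fun z : Vec d × Vec d => torusRepr (z.2 + φ z.1))
      ((torusVolume d).prod (torusVolume d)) (torusVolume d) :=
  measurePreserving_snd.comp (measurePreserving_torus_shear hφ)

variable {𝕜 E : Type*} [NormedField 𝕜] [NormedAddCommGroup E] [NormedSpace 𝕜 E]

theorem spLp_eq_eLpNorm {p : ℝ≥0∞} (hp : p ≠ 0) (f : Vec d → E) :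
    spLp p f = eLpNorm f p (torusVolume d) := by
  rw [eLpNorm, if_neg hp]
  rfl

theorem memLp_torusVolume_of_continuous {f : Vec d → E} (hf : Continuous f) (p : ℝ≥0∞) :
    MemLp f p (torusVolume d) := by
  obtain ⟨C, hC⟩ := isCompact_Icc.exists_bound_of_continuousOn (s := fundCube d) hf.continuousOn
  exact .of_bound hf.aestronglyMeasurable C (ae_restrict_of_forall_mem measurableSet_Icc hC)

theorem ZPer.aestronglyMeasurable_volume {f : Vec d → E} (hf : ZPer f)
    (hfm : AEStronglyMeasurable f (torusVolume d)) : AEStronglyMeasurable f volume := by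
  simpa only [Function.comp_def, hf.comp_torusRepr] using
    hfm.comp_quasiMeasurePreserving quasiMeasurePreserving_torusRepr

theorem ZPer.aestronglyMeasurable_comp_smul {f : Vec d → E} (hf : ZPer f)
    (hfm : AEStronglyMeasurable f (torusVolume d)) {c : ℝ} (hc : c ≠ 0) :
    AEStronglyMeasurable (fun x => f (c • x)) (torusVolume d) :=
  ((hf.aestronglyMeasurable_volume hfm).comp_quasiMeasurePreserving
    (Measure.quasiMeasurePreserving_smul volume hc)).mono_measure Measure.restrict_le_self

theorem ZPer.memLp_comp_snd_add {f : Vec d → E} (hf : ZPer f) {p : ℝ≥0∞}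
    (hfp : MemLp f p (torusVolume d)) {φ : Vec d → Vec d} (hφ : Measurable φ) :
    MemLp (fun z : Vec d × Vec d => f (z.2 + φ z.1)) p
      ((torusVolume d).prod (torusVolume d)) := by
  simpa only [Function.comp_def, hf.comp_torusRepr] using
    hfp.comp_measurePreserving (measurePreserving_torusRepr_snd_add hφ)

theorem ZPer.eLpNorm_comp_snd_add {f : Vec d → E} (hf : ZPer f)
    (hfm : AEStronglyMeasurable f (torusVolume d)) {φ : Vec d → Vec d} (hφ : Measurable φ)
    (p : ℝ≥0∞) :
    eLpNorm (fun z : Vec d × Vec d => f (z.2 + φ z.1)) p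
      ((torusVolume d).prod (torusVolume d)) = eLpNorm f p (torusVolume d) := by
  simpa only [Function.comp_def, hf.comp_torusRepr] using
    eLpNorm_comp_measurePreserving (p := p) hfm (measurePreserving_torusRepr_snd_add hφ)

theorem ZPer.memLp_smul_comp_snd_add {f : Vec d → E} (hf : ZPer f) {a : Vec d → 𝕜} {p : ℝ≥0∞}
    (hap : MemLp a p (torusVolume d)) (hfp : MemLp f p (torusVolume d))
    {φ : Vec d → Vec d} (hφ : Measurable φ) :
    MemLp (fun z : Vec d × Vec d => a z.1 • f (z.2 + φ z.1)) p
      ((torusVolume d).prod (torusVolume d)) := by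
  simpa only [Function.comp_def, hf.comp_torusRepr] using
    (memLp_prod_smul hap hfp).comp_measurePreserving (measurePreserving_torus_shear hφ)

theorem ZPer.eLpNorm_smul_comp_snd_add {f : Vec d → E} (hf : ZPer f)
    (hfm : AEStronglyMeasurable f (torusVolume d)) {a : Vec d → 𝕜}
    (ham : AEStronglyMeasurable a (torusVolume d)) {φ : Vec d → Vec d} (hφ : Measurable φ)
    (p : ℝ≥0∞) :
    eLpNorm (fun z : Vec d × Vec d => a z.1 • f (z.2 + φ z.1)) p
        ((torusVolume d).prod (torusVolume d)) =
      eLpNorm a p (torusVolume d) * eLpNorm f p (torusVolume d) := by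
  have meas : AEStronglyMeasurable (fun z : Vec d × Vec d => a z.1 • f z.2)
      ((torusVolume d).prod (torusVolume d)) := ham.comp_fst.smul hfm.comp_snd
  rw [← eLpNorm_prod_smul ham hfm,
    ← eLpNorm_comp_measurePreserving meas (measurePreserving_torus_shear hφ)]
  simp only [Function.comp_def, hf.comp_torusRepr]

theorem ae_norm_add_smul_sub_le {K : ℝ≥0} {a : Vec d → E} (ha : LipschitzWith K a) (c : ℝ) :
    ∀ᵐ z ∂(torusVolume d).prod (torusVolume d), ‖a (z.1 + c • z.2) - a z.1‖ ≤ K * |c| := by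
  filter_upwards [Measure.quasiMeasurePreserving_snd.ae ae_torusVolume_norm_le_one] with z hz
  calc ‖a (z.1 + c • z.2) - a z.1‖
      ≤ K * ‖z.1 + c • z.2 - z.1‖ := ha.norm_sub_le _ _
    _ = K * (|c| * ‖z.2‖) := by rw [add_sub_cancel_left, norm_smul, Real.norm_eq_abs]
    _ ≤ K * |c| := by gcongr; exact mul_le_of_le_one_right (abs_nonneg c) hz

theorem eLpNorm_unfold_smul {σ : ℕ} (hσ : 0 < σ) {a : Vec d → 𝕜} {f : Vec d → E}
    (ha : AEStronglyMeasurable a (torusVolume d)) (hap : ZPer a)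
    (hf : AEStronglyMeasurable f (torusVolume d)) (hfp : ZPer f) (p : ℝ≥0∞) :
    eLpNorm (fun z : Vec d × Vec d => a (z.1 + (σ : ℝ)⁻¹ • z.2) • f (z.2 + (σ : ℝ) • z.1)) p
        ((torusVolume d).prod (torusVolume d)) =
      eLpNorm (fun x => a x • f ((σ : ℝ) • x)) p (torusVolume d) := by
  have hσ0 : (σ : ℝ) ≠ 0 := Nat.cast_ne_zero.2 hσ.ne'
  have periodic : ZPer fun x => a x • f ((σ : ℝ) • x) := fun x k => by
    simp only [hap x k, hfp.comp_natCast_smul σ x k]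
  have meas : AEStronglyMeasurable (fun x => a x • f ((σ : ℝ) • x)) (torusVolume d) :=
    ha.smul (hfp.aestronglyMeasurable_comp_smul hf hσ0)
  have averaging : MeasurePreserving
      (fun z : Vec d × Vec d => torusRepr (z.1 + (σ : ℝ)⁻¹ • z.2))
      ((torusVolume d).prod (torusVolume d)) (torusVolume d) :=
    (measurePreserving_torusRepr_snd_add (measurable_const_smul (σ : ℝ)⁻¹)).comp
      Measure.measurePreserving_swap
  rw [← eLpNorm_comp_measurePreserving meas averaging]
  congr 1
  ext z
  calc a (z.1 + (σ : ℝ)⁻¹ • z.2) • f (z.2 + (σ : ℝ) • z.1)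
      = a (z.1 + (σ : ℝ)⁻¹ • z.2) • f ((σ : ℝ) • (z.1 + (σ : ℝ)⁻¹ • z.2)) := by
        rw [smul_add, smul_inv_smul₀ hσ0, add_comm z.2]
    _ = _ := (periodic.comp_torusRepr _).symm

end Torus

section CkN

variable {d : ℕ} {a : Vec d → ℝ}

theorem sSup_image_norm_nonneg {α E : Type*} [SeminormedAddGroup E] (f : α → E) (s : Set α) :
    0 ≤ sSup ((fun x => ‖f x‖) '' s) :=
  Real.sSup_nonneg <| Set.forall_mem_image.2 fun _ _ => norm_nonneg _

theorem ckN_nonneg (N : ℕ) (φ : Vec d → ℝ) : 0 ≤ CkN N φ :=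
  Finset.sum_nonneg fun _ _ => sSup_image_norm_nonneg _ _

theorem ZPer.zPer_iteratedFDeriv {F : Type*} [NormedAddCommGroup F] [NormedSpace ℝ F]
    {f : Vec d → F} (hf : ZPer f) (n : ℕ) : ZPer (iteratedFDeriv ℝ n f) := fun x k => by
  rw [← iteratedFDeriv_comp_add_right]
  exact congrArg (fun g => iteratedFDeriv ℝ n g x) (funext fun y => hf y k)

theorem ZPer.norm_le_sSup_fundCube {E : Type*} [SeminormedAddGroup E] {f : Vec d → E}
    (hf : ZPer f) (hfc : Continuous f) (x : Vec d) :
    ‖f x‖ ≤ sSup ((fun x => ‖f x‖) '' fundCube d) := by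
  rw [← hf.comp_torusRepr x]
  exact le_csSup (isCompact_Icc.image hfc.norm).bddAbove ⟨_, torusRepr_mem_fundCube x, rfl⟩

theorem ZPer.norm_iteratedFDeriv_le_ckN (hap : ZPer a) {N : ℕ} (ha : ContDiff ℝ N a) {n : ℕ}
    (hn : n ≤ N) (x : Vec d) : ‖iteratedFDeriv ℝ n a x‖ ≤ CkN N a :=
  calc ‖iteratedFDeriv ℝ n a x‖
      ≤ sSup ((fun x => ‖iteratedFDeriv ℝ n a x‖) '' fundCube d) :=
        (hap.zPer_iteratedFDeriv n).norm_le_sSup_fundCube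
          (ha.continuous_iteratedFDeriv (by exact_mod_cast hn)) x
    _ ≤ CkN N a :=
        Finset.single_le_sum
          (f := fun i => sSup ((fun x => ‖iteratedFDeriv ℝ i a x‖) '' fundCube d))
          (fun _ _ => sSup_image_norm_nonneg _ _) (Finset.mem_range.2 (Nat.lt_succ_of_le hn))

theorem ZPer.lipschitzWith_ckN_one (hap : ZPer a) (ha : ContDiff ℝ 1 a) :
    LipschitzWith (CkN 1 a).toNNReal a := by
  refine lipschitzWith_of_nnnorm_fderiv_le (𝕜 := ℝ) (ha.differentiable one_ne_zero) fun x => ?_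
  rw [← norm_toNNReal, ← norm_iteratedFDeriv_one]
  exact Real.toNNReal_le_toNNReal (hap.norm_iteratedFDeriv_le_ckN ha le_rfl x)

end CkN

theorem inv_le_rpow_neg_toReal_one_div {x : ℝ} (hx : 1 ≤ x) {p : ℝ≥0∞} (hp : 1 ≤ p) :
    x⁻¹ ≤ x ^ (-(1 / p).toReal) := by
  rw [← Real.rpow_neg_one]
  refine Real.rpow_le_rpow_of_exponent_le hx (neg_le_neg ?_)
  exact ENNReal.toReal_le_of_le_ofReal zero_le_one (by simpa using hp)

theorem improved_holder_inequality_general {d : ℕ} {𝕜 E : Type*} [NormedField 𝕜]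
    [NormedAddCommGroup E] [NormedSpace 𝕜 E] {r : ℝ≥0∞} (hr : 1 ≤ r) {σ : ℕ} (hσ : 0 < σ)
    {K : ℝ≥0} {a : Vec d → 𝕜} {f : Vec d → E} (ha : LipschitzWith K a) (hap : ZPer a)
    (hf : MemLp f r (torusVolume d)) (hfp : ZPer f) :
    |(spLp r (fun x => a x • f ((σ : ℝ) • x))).toReal - (spLp r a).toReal * (spLp r f).toReal|
      ≤ K * (σ : ℝ)⁻¹ * (spLp r f).toReal := by
  have hr0 : r ≠ 0 := (zero_lt_one.trans_le hr).ne'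
  have hσm : Measurable fun x : Vec d => (σ : ℝ) • x := measurable_const_smul _
  have ha_memLp := memLp_torusVolume_of_continuous ha.continuous r
  have hf_memLp := hfp.memLp_comp_snd_add hf hσm
  have slow_continuous : Continuous fun z : Vec d × Vec d => a (z.1 + (σ : ℝ)⁻¹ • z.2) :=
    ha.continuous.comp (by fun_prop)
  have unfolded_aestronglyMeasurable : AEStronglyMeasurable
      (fun z : Vec d × Vec d => a (z.1 + (σ : ℝ)⁻¹ • z.2) • f (z.2 + (σ : ℝ) • z.1))
      ((torusVolume d).prod (torusVolume d)) :=
    slow_continuous.aestronglyMeasurable.smul hf_memLp.1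
  have freezing_error : ∀ᵐ z ∂(torusVolume d).prod (torusVolume d),
      ‖a (z.1 + (σ : ℝ)⁻¹ • z.2) • f (z.2 + (σ : ℝ) • z.1) - a z.1 • f (z.2 + (σ : ℝ) • z.1)‖
        ≤ (K * (σ : ℝ≥0)⁻¹ : ℝ≥0) * ‖f (z.2 + (σ : ℝ) • z.1)‖ := by
    filter_upwards [ae_norm_add_smul_sub_le ha (σ : ℝ)⁻¹] with z hz
    rw [← sub_smul, norm_smul]
    gcongr
    simpa using hz
  rw [spLp_eq_eLpNorm hr0, spLp_eq_eLpNorm hr0, spLp_eq_eLpNorm hr0,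
    ← eLpNorm_unfold_smul hσ ha_memLp.1 hap hf.1 hfp, ← ENNReal.toReal_mul,
    ← hfp.eLpNorm_smul_comp_snd_add hf.1 ha_memLp.1 hσm, ← hfp.eLpNorm_comp_snd_add hf.1 hσm]
  simpa using abs_toReal_eLpNorm_sub_le_of_ae_le_mul hr unfolded_aestronglyMeasurable
    (hfp.memLp_smul_comp_snd_add ha_memLp hf hσm) hf_memLp freezing_error

/-- **Improved Hölder inequality** (Lemma 2.4 / [MS18, Lemma 2.1]): for `d ≥ 1`
and `r ∈ [1,∞]` there is `C_r` such that for all `σ ∈ ℕ₊` and smooth periodic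
`a, f` on `𝕋^d`,
`| ‖a(·)f(σ·)‖_{L^r} − ‖a‖_{L^r}‖f‖_{L^r} | ≤ C_r σ^{−1/r} ‖a‖_{C¹} ‖f‖_{L^r}`. -/
theorem improved_holder_inequality (d : ℕ) (hd : 1 ≤ d)
    (r : ℝ≥0∞) (hr : 1 ≤ r) :
    ∃ C : ℝ, 0 < C ∧ ∀ (σ : ℕ), 0 < σ → ∀ (a f : Vec d → ℝ),
      ContDiff ℝ (⊤ : ℕ∞) a → ZPer a →
      ContDiff ℝ (⊤ : ℕ∞) f → ZPer f →
      |(spLp r (fun x => a x * f ((σ : ℝ) • x))).toReal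
          - (spLp r a).toReal * (spLp r f).toReal|
        ≤ C * (σ : ℝ) ^ (-(1 / r).toReal) * CkN 1 a * (spLp r f).toReal := by
  refine ⟨1, one_pos, fun σ hσ a f ha hap hf hfp => ?_⟩
  have lipschitz := hap.lipschitzWith_ckN_one (ha.of_le (by norm_num))
  calc |(spLp r (fun x => a x * f ((σ : ℝ) • x))).toReal - (spLp r a).toReal * (spLp r f).toReal|
      ≤ (CkN 1 a).toNNReal * (σ : ℝ)⁻¹ * (spLp r f).toReal :=
        improved_holder_inequality_general (𝕜 := ℝ) hr hσ lipschitz hap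
          (memLp_torusVolume_of_continuous hf.continuous r) hfp
    _ = 1 * (σ : ℝ)⁻¹ * CkN 1 a * (spLp r f).toReal := by
        rw [Real.coe_toNNReal _ (ckN_nonneg 1 a)]; ring
    _ ≤ 1 * (σ : ℝ) ^ (-(1 / r).toReal) * CkN 1 a * (spLp r f).toReal := by
        gcongr
        · exact ckN_nonneg 1 a
        · exact inv_le_rpow_neg_toReal_one_div (by exact_mod_cast hσ) hr
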